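/- In Stage One of SHALE, the projected delivery never exceeds the demand: for every iteration t ≥ 0 and every contract j, d_j(α^t) = Σ_{i∈Γ(j)} s_i g_{ij}(α^t_j − β^t_i) ≤ d_j. -/

import Mathlib

open Finset Filter Topology

noncomputable section

variable {I J : Type*} [Fintype I] [Fintype J]

open Classical in
/-- Γ(j): the impressions eligible for contract `j`. -/
def GammaD (adj : I → J → Prop) (j : J) : Finset I :=
  Finset.univ.filter (fun i => adj i j)

open Classical in
/-- Γ(i): the contracts eligible for impression `i`. -/
def GammaS (adj : I → J → Prop) (i : I) : Finset J :=
  Finset.univ.filter (fun j => adj i j)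

/-- Total eligible supply `S_j = ∑_{i ∈ Γ(j)} s_i`. -/
def Stot (adj : I → J → Prop) (s : I → ℝ) (j : J) : ℝ :=
  ∑ i ∈ GammaD adj j, s i

/-- Target `θ_{ij} = d_j / S_j` (independent of `i`). -/
def theta (adj : I → J → Prop) (s : I → ℝ) (d : J → ℝ) (j : J) : ℝ :=
  d j / Stot adj s j

/-- `g_{ij}(z) = max {0, θ_{ij} (1 + z / V_j)}` (independent of `i`). -/
def gfun (adj : I → J → Prop) (s : I → ℝ) (d V : J → ℝ) (j : J) (z : ℝ) : ℝ :=
  max 0 ((theta adj s d j) * (1 + z / V j))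

/-- `b` is a valid supply dual `β_i` for demand duals `α`: `b ≥ 0` and either `b = 0` with
`∑_{j ∈ Γ(i)} g_{ij}(α_j) ≤ 1`, or `∑_{j ∈ Γ(i)} g_{ij}(α_j − b) = 1`. -/
def BetaSpec (adj : I → J → Prop) (s : I → ℝ) (d V : J → ℝ)
    (α : J → ℝ) (i : I) (b : ℝ) : Prop :=
  0 ≤ b ∧ ((b = 0 ∧ ∑ j ∈ GammaS adj i, gfun adj s d V j (α j) ≤ 1) ∨
    ∑ j ∈ GammaS adj i, gfun adj s d V j (α j - b) = 1)

/-- Stage One of SHALE: `α⁰ = 0`; `β^t_i` is a valid supply dual for `α^t`; and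
`α^{t+1}_j = min (p_j) a_j` where `a_j` solves `∑_{i ∈ Γ(j)} s_i g_{ij}(a_j − β^t_i) = d_j`. -/
def StageOne (adj : I → J → Prop) (s : I → ℝ) (d p V : J → ℝ)
    (α : ℕ → J → ℝ) (β : ℕ → I → ℝ) : Prop :=
  (∀ j, α 0 j = 0) ∧
  (∀ t i, BetaSpec adj s d V (α t) i (β t i)) ∧
  (∀ t j, ∃ a : ℝ,
    (∑ i ∈ GammaD adj j, s i * gfun adj s d V j (a - β t i) = d j) ∧
    α (t + 1) j = min (p j) a)

/-- Projected delivery `d_j(α) = ∑_{i ∈ Γ(j)} s_i g_{ij}(α_j − β_i)`. -/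
def Dproj (adj : I → J → Prop) (s : I → ℝ) (d V : J → ℝ)
    (α : J → ℝ) (β : I → ℝ) (j : J) : ℝ :=
  ∑ i ∈ GammaD adj j, s i * gfun adj s d V j (α j - β i)

/-- The objective of the allocation problem. -/
def Fobj (adj : I → J → Prop) (s : I → ℝ) (d p V : J → ℝ)
    (x : I → J → ℝ) (u : J → ℝ) : ℝ :=
  (1 / 2) * ∑ j, ∑ i ∈ GammaD adj j,
      s i * (V j / theta adj s d j) * (x i j - theta adj s d j) ^ 2
    + ∑ j, p j * u j

/-- Feasibility for the allocation problem. -/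
def Feasible (adj : I → J → Prop) (s : I → ℝ) (d : J → ℝ)
    (x : I → J → ℝ) (u : J → ℝ) : Prop :=
  (∀ j, d j ≤ ∑ i ∈ GammaD adj j, s i * x i j + u j) ∧
  (∀ i, ∑ j ∈ GammaS adj i, x i j ≤ 1) ∧
  (∀ i j, adj i j → 0 ≤ x i j) ∧
  (∀ j, 0 ≤ u j)

/-- The KKT conditions for duals `(α, β)`. -/
def KKT (adj : I → J → Prop) (s : I → ℝ) (d p V : J → ℝ)
    (α : J → ℝ) (β : I → ℝ) : Prop :=
  (∀ j, 0 ≤ α j ∧ α j ≤ p j) ∧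
  (∀ i, 0 ≤ β i ∧ (∑ j ∈ GammaS adj i, gfun adj s d V j (α j - β i) ≤ 1) ∧
    (0 < β i → ∑ j ∈ GammaS adj i, gfun adj s d V j (α j - β i) = 1)) ∧
  (∀ j, (∑ i ∈ GammaD adj j, s i * gfun adj s d V j (α j - β i) ≤ d j) ∧
    (α j < p j → ∑ i ∈ GammaD adj j, s i * gfun adj s d V j (α j - β i) = d j))

/-!
The induction proves more than the delivery bound: both dual sequences are nondecreasing. If
`d_j(α^t) ≤ d_j` for all `j`, then the root `a_j` of the demand equation is at least `α^t_j`, so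
`α^t ≤ α^{t+1}`. Larger demand duals force larger supply duals, so `β^t ≤ β^{t+1}`. Finally
`α^{t+1}_j ≤ a_j` and `β^{t+1} ≥ β^t` bound `d_j(α^{t+1})` by the delivery at `a_j` against `β^t`,
which is `d_j`.
-/

section OrderedSums

variable {ι M : Type*} [AddCommMonoid M] [LinearOrder M] [IsOrderedCancelAddMonoid M]

theorem sum_lt_sum_of_sum_pos {u : Finset ι} {f g : ι → M} (hle : ∀ i ∈ u, f i ≤ g i)
    (hlt : ∀ i ∈ u, 0 < f i → f i < g i) (hpos : 0 < ∑ i ∈ u, f i) :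
    ∑ i ∈ u, f i < ∑ i ∈ u, g i := by
  obtain ⟨k, hk, hfk⟩ : ∃ k ∈ u, 0 < f k :=
    exists_lt_of_sum_lt (by rwa [sum_const_zero])
  exact sum_lt_sum hle ⟨k, hk, hlt k hk hfk⟩

end OrderedSums

section Demand

omit [Fintype J]

variable {adj : I → J → Prop} {s : I → ℝ} {d V : J → ℝ} {j : J}

theorem gfun_monotone (hθ : 0 ≤ theta adj s d j) (hV : 0 < V j) :
    Monotone (gfun adj s d V j) := by
  intro x y hxy
  unfold gfun
  gcongr

theorem gfun_lt_gfun (hθ : 0 ≤ theta adj s d j) (hV : 0 < V j) {x y : ℝ} (hxy : x < y)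
    (hx : 0 < gfun adj s d V j x) : gfun adj s d V j x < gfun adj s d V j y := by
  have hpos : 0 < theta adj s d j * (1 + x / V j) :=
    (lt_max_iff.1 hx).resolve_left (lt_irrefl 0)
  have hθ_pos : 0 < theta adj s d j := hθ.lt_of_ne' (left_ne_zero_of_mul hpos.ne')
  calc gfun adj s d V j x = theta adj s d j * (1 + x / V j) := max_eq_right hpos.le
    _ < theta adj s d j * (1 + y / V j) := by gcongr
    _ ≤ gfun adj s d V j y := le_max_right _ _

theorem gfun_zero (hθ : 0 ≤ theta adj s d j) : gfun adj s d V j 0 = theta adj s d j := by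
  rw [gfun, zero_div, add_zero, mul_one, max_eq_right hθ]

/-- The delivery `∑_{i ∈ Γ(j)} s_i g_{ij}(a − β_i)` to contract `j`, as a function of its own
demand dual `a`. The projected delivery `Dproj adj s d V α β j` is its value at `a = α j`. -/
def delivery (adj : I → J → Prop) (s : I → ℝ) (d V : J → ℝ) (β : I → ℝ) (j : J) (a : ℝ) : ℝ :=
  ∑ i ∈ GammaD adj j, s i * gfun adj s d V j (a - β i)

theorem delivery_le_delivery (hs : ∀ i, 0 ≤ s i) (hθ : 0 ≤ theta adj s d j) (hV : 0 < V j)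
    {β β' : I → ℝ} (hβ : β ≤ β') {a a' : ℝ} (ha : a' ≤ a) :
    delivery adj s d V β' j a' ≤ delivery adj s d V β j a :=
  sum_le_sum fun i _ =>
    mul_le_mul_of_nonneg_left (gfun_monotone hθ hV (sub_le_sub ha (hβ i))) (hs i)

theorem delivery_lt_delivery (hs : ∀ i, 0 ≤ s i) (hθ : 0 ≤ theta adj s d j) (hV : 0 < V j)
    {β : I → ℝ} {a a' : ℝ} (ha : a < a') (hpos : 0 < delivery adj s d V β j a) :
    delivery adj s d V β j a < delivery adj s d V β j a' := by
  refine sum_lt_sum_of_sum_pos (fun i _ => ?_) (fun i _ hi => ?_) hpos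
  · exact mul_le_mul_of_nonneg_left (gfun_monotone hθ hV (sub_le_sub_right ha.le _)) (hs i)
  · have hsi : 0 < s i := (hs i).lt_of_ne' (left_ne_zero_of_mul hi.ne')
    have hg : 0 < gfun adj s d V j (a - β i) := pos_of_mul_pos_right hi (hs i)
    exact mul_lt_mul_of_pos_left (gfun_lt_gfun hθ hV (sub_lt_sub_right ha _) hg) hsi

theorem delivery_zero_zero (hθ : 0 ≤ theta adj s d j) (hS : Stot adj s j ≠ 0) :
    delivery adj s d V 0 j 0 = d j := by
  calc delivery adj s d V 0 j 0
      = ∑ i ∈ GammaD adj j, s i * theta adj s d j := by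
        simp only [delivery, Pi.zero_apply, sub_zero, gfun_zero hθ]
    _ = Stot adj s j * theta adj s d j := (sum_mul _ _ _).symm
    _ = d j := mul_div_cancel₀ _ hS

end Demand

section Supply

variable {adj : I → J → Prop} {s : I → ℝ} {d V : J → ℝ} {α α' : J → ℝ} {i : I} {b b' : ℝ}

/-- The load `∑_{j ∈ Γ(i)} g_{ij}(α_j − b)` of impression `i`, i.e. the fraction of it allocated
when its supply dual is `b`. -/
def load (adj : I → J → Prop) (s : I → ℝ) (d V : J → ℝ) (α : J → ℝ) (i : I) (b : ℝ) : ℝ :=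
  ∑ j ∈ GammaS adj i, gfun adj s d V j (α j - b)

theorem load_lt_load (hθ : ∀ j, 0 ≤ theta adj s d j) (hV : ∀ j, 0 < V j) (hα : α ≤ α')
    (hb : b' < b) (hpos : 0 < load adj s d V α i b) :
    load adj s d V α i b < load adj s d V α' i b' := by
  have hlt (j : J) : α j - b < α' j - b' := by linarith [hα j]
  exact sum_lt_sum_of_sum_pos (fun j _ => gfun_monotone (hθ j) (hV j) (hlt j).le)
    (fun j _ => gfun_lt_gfun (hθ j) (hV j) (hlt j)) hpos

namespace BetaSpec

theorem load_le_one (h : BetaSpec adj s d V α i b) : load adj s d V α i b ≤ 1 := by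
  rcases h.2 with ⟨rfl, hle⟩ | heq
  · simpa only [load, sub_zero] using hle
  · exact heq.le

theorem load_eq_one (h : BetaSpec adj s d V α i b) (hb : 0 < b) : load adj s d V α i b = 1 :=
  h.2.resolve_left fun hzero => hb.ne' hzero.1

theorem le_of_le (hθ : ∀ j, 0 ≤ theta adj s d j) (hV : ∀ j, 0 < V j) (hα : α ≤ α')
    (h : BetaSpec adj s d V α i b) (h' : BetaSpec adj s d V α' i b') : b ≤ b' := by
  by_contra! hlt
  have hfull : load adj s d V α i b = 1 := h.load_eq_one (h'.1.trans_lt hlt)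
  have hload : load adj s d V α i b < load adj s d V α' i b' :=
    load_lt_load hθ hV hα hlt (hfull ▸ one_pos)
  exact (hfull ▸ hload).not_ge h'.load_le_one

end BetaSpec

end Supply

namespace StageOne

variable {adj : I → J → Prop} {s : I → ℝ} {d p V : J → ℝ} {α : ℕ → J → ℝ} {β : ℕ → I → ℝ}

theorem alpha_le_penalty (h : StageOne adj s d p V α β) (hp : ∀ j, 0 ≤ p j) (t : ℕ) :
    α t ≤ p := by
  intro j
  cases t with
  | zero => exact (h.1 j).trans_le (hp j)
  | succ t =>
    obtain ⟨a, -, hα⟩ := h.2.2 t j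
    exact hα.trans_le (min_le_left _ _)

theorem Dproj_zero_le (h : StageOne adj s d p V α β) (hs : ∀ i, 0 ≤ s i) {j : J}
    (hθ : 0 ≤ theta adj s d j) (hV : 0 < V j) (hS : Stot adj s j ≠ 0) :
    Dproj adj s d V (α 0) (β 0) j ≤ d j := by
  calc Dproj adj s d V (α 0) (β 0) j
      ≤ delivery adj s d V 0 j 0 :=
        delivery_le_delivery hs hθ hV (fun i => (h.2.1 0 i).1) (h.1 j).le
    _ = d j := delivery_zero_zero hθ hS

theorem alpha_le_alpha_succ (h : StageOne adj s d p V α β) (hs : ∀ i, 0 ≤ s i) {j : J}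
    (hd : 0 < d j) (hθ : 0 ≤ theta adj s d j) (hV : 0 < V j) {t : ℕ} (hp : α t j ≤ p j)
    (hD : Dproj adj s d V (α t) (β t) j ≤ d j) : α t j ≤ α (t + 1) j := by
  obtain ⟨a, (ha : delivery adj s d V (β t) j a = d j), hα⟩ := h.2.2 t j
  rw [hα]
  refine le_min hp (le_of_not_gt fun hlt => ?_)
  have hlt_delivery : delivery adj s d V (β t) j a < Dproj adj s d V (α t) (β t) j :=
    delivery_lt_delivery hs hθ hV hlt (ha ▸ hd)
  exact (ha ▸ hlt_delivery).not_ge hD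

theorem Dproj_succ_le (h : StageOne adj s d p V α β) (hs : ∀ i, 0 ≤ s i) {j : J}
    (hθ : 0 ≤ theta adj s d j) (hV : 0 < V j) {t : ℕ} (hβ : β t ≤ β (t + 1)) :
    Dproj adj s d V (α (t + 1)) (β (t + 1)) j ≤ d j := by
  obtain ⟨a, ha, hα⟩ := h.2.2 t j
  calc Dproj adj s d V (α (t + 1)) (β (t + 1)) j
      ≤ delivery adj s d V (β t) j a :=
        delivery_le_delivery hs hθ hV hβ (hα.trans_le (min_le_right _ _))
    _ = d j := ha

end StageOne

theorem shale_projected_delivery_le_demand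
    (adj : I → J → Prop) (s : I → ℝ) (d p V : J → ℝ)
    (hs : ∀ i, 0 < s i) (hd : ∀ j, 0 < d j) (hp : ∀ j, 0 < p j) (hV : ∀ j, 0 < V j)
    (hS : ∀ j, 0 < Stot adj s j)
    (α : ℕ → J → ℝ) (β : ℕ → I → ℝ) (hstage : StageOne adj s d p V α β) :
    ∀ t j, Dproj adj s d V (α t) (β t) j ≤ d j := by
  have hs_nonneg (i : I) : 0 ≤ s i := (hs i).le
  have hθ (j : J) : 0 ≤ theta adj s d j := div_nonneg (hd j).le (hS j).le
  intro t
  induction t with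
  | zero => exact fun j => hstage.Dproj_zero_le hs_nonneg (hθ j) (hV j) (hS j).ne'
  | succ t hD =>
    have hα : α t ≤ α (t + 1) := fun j =>
      hstage.alpha_le_alpha_succ hs_nonneg (hd j) (hθ j) (hV j)
        (hstage.alpha_le_penalty (fun j => (hp j).le) t j) (hD j)
    have hβ : β t ≤ β (t + 1) := fun i =>
      BetaSpec.le_of_le hθ hV hα (hstage.2.1 t i) (hstage.2.1 (t + 1) i)
    exact fun j => hstage.Dproj_succ_le hs_nonneg (hθ j) (hV j) hβ

end
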